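/- Suppose α has an adjusted nearest integer expansion and let d_n^± be the quantities associated to γ_*. If σ ∈ {+1, −1} satisfies σ·d_i^+ < 0, ᾱ_i < 1/2, and it is not the case that a_{i+1} = 3 with ε_{i+1} = −1, then (1/4)·(1 − ᾱ_i + σ·d_i^−)·(1 + ε_{i+1}α_i + σ·d_i^+)/(1 + ε_{i+1}ᾱ_i α_i) > 1/24. -/

import Mathlib

open Filter Finset

attribute [local instance] Classical.propDecidable

/-- Distance from `x` to the nearest integer, `‖x‖`. -/
noncomputable def nint (x : ℝ) : ℝ := |x - round x|

/-- The two-sided inhomogeneous approximation constant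
`M(α,γ) = liminf_{|n|→∞} |n|·‖nα-γ‖`. -/
noncomputable def Mval (α γ : ℝ) : ℝ :=
  Filter.liminf (fun n : ℤ => (|n| : ℝ) * nint (n * α - γ)) Filter.cofinite

/-- Denominators `q_i` of a semi-regular continued fraction with partial quotients `a`
and signs `e`: `q_0 = 1`, `q_1 = a_1`, `q_i = a_i q_{i-1} + ε_i q_{i-2}`. -/
noncomputable def qs (a e : ℕ → ℤ) : ℕ → ℤ
  | 0 => 1
  | 1 => a 1
  | i + 2 => a (i + 2) * qs a e (i + 1) + e (i + 2) * qs a e i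

/-- Reversed tails `ᾱ_i = q_{i-1}/q_i` (with `ᾱ_0 = 0`). -/
noncomputable def ab (a e : ℕ → ℤ) (i : ℕ) : ℝ :=
  if i = 0 then 0 else (qs a e (i - 1) : ℝ) / (qs a e i : ℝ)

/-- An adjusted nearest integer expansion of `α`: a semi-regular continued fraction
`α = 1/(a_1 + ε_2/(a_2 + ε_3/(a_3 + ⋯)))` with tails `t i = α_i`, satisfying the
conditions (i)-(iv) of an adjusted expansion. -/
structure ANIE (α : ℝ) where
  /-- partial quotients `a_i` (for `i ≥ 1`) -/
  a : ℕ → ℤ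
  /-- signs `ε_i` -/
  e : ℕ → ℤ
  /-- tails: `t i = α_i`, `t 0 = α` -/
  t : ℕ → ℝ
  ha : ∀ i, 1 ≤ i → 2 ≤ a i
  he : ∀ i, e i = 1 ∨ e i = -1
  he1 : e 1 = 1
  ht0 : t 0 = α
  htpos : ∀ i, 0 < t i
  htlt1 : ∀ i, t i < 1
  hrec : ∀ i, t i = 1 / ((a (i + 1) : ℝ) + (e (i + 2) : ℝ) * t (i + 1))
  /-- condition (i): `a_i = 2` implies `ε_i = +1` or `ε_{i+1} = +1` -/
  hcond1 : ∀ i, 1 ≤ i → a i = 2 → e i = 1 ∨ e (i + 1) = 1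
  /-- condition (ii): if `a_i = 2`, `ε_i = -1` then `1/ᾱ_{i-1} - 1/α_i ≥ 1` -/
  hcond2 : ∀ i, 1 ≤ i → a i = 2 → e i = -1 → 1 / ab a e (i - 1) - 1 / t i ≥ 1
  /-- condition (iii): if `a_i = 2`, `ε_{i+1} = -1` then `1/α_i - 1/ᾱ_{i-1} > 1` -/
  hcond3 : ∀ i, 1 ≤ i → a i = 2 → e (i + 1) = -1 → 1 / t i - 1 / ab a e (i - 1) > 1
  /-- condition (iv): no block `2, (-3,)^k, -2` in the sequence `(ε_i a_i)` -/
  hcond4 : ∀ i k, 1 ≤ i →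
    ¬(e i * a i = 2 ∧ (∀ j, j < k → e (i + 1 + j) * a (i + 1 + j) = -3) ∧
        e (i + 1 + k) * a (i + 1 + k) = -2)

namespace ANIE

variable {α : ℝ}

/-- `D n = D_{n-1} = α_0 α_1 ⋯ α_{n-1}` (so `D 0 = 1`, `D 1 = α`). -/
noncomputable def D (E : ANIE α) (n : ℕ) : ℝ := ∏ j ∈ Finset.range n, E.t j

/-- The number of indices `1 ≤ k ≤ i` with `a_k` odd. -/
noncomputable def oddIdx (E : ANIE α) (i : ℕ) : ℕ :=
  ((Finset.Icc 1 i).filter fun k => Odd (E.a k)).card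

/-- `λ_i`: zero if `a_i` is even, `(-1)^j` if `a_i = a_{n_j}` is the `j`-th odd partial
quotient. -/
noncomputable def lam (E : ANIE α) (i : ℕ) : ℤ :=
  if Odd (E.a i) then (-1) ^ E.oddIdx i else 0

/-- `γ_* = Σ_{i≥1} (a_i - 1 + ε_i + λ_i)/2 · D_{i-1}`. -/
noncomputable def gammaStar (E : ANIE α) : ℝ :=
  ∑' k : ℕ,
    (((E.a (k + 1) : ℝ) - 1 + (E.e (k + 1) : ℝ) + (E.lam (k + 1) : ℝ)) / 2) * E.D (k + 1)

/-- `ᾱ_i = q_{i-1}/q_i`. -/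
noncomputable def abar (E : ANIE α) (i : ℕ) : ℝ := ab E.a E.e i

/-- `δ_i = -(-ε_1)(-ε_2)⋯(-ε_{i+1})`. -/
noncomputable def delta (E : ANIE α) (i : ℕ) : ℤ := -∏ j ∈ Finset.Icc 1 (i + 1), (-E.e j)

/-- `d_n^- = (Σ_{i=1}^n t_i δ_{i-1} q_{i-1}) / (δ_{n-1} q_n)` for `γ_*` (`t_i = λ_i`). -/
noncomputable def dminus (E : ANIE α) (n : ℕ) : ℝ :=
  (∑ i ∈ Finset.Icc 1 n, (E.lam i : ℝ) * (E.delta (i - 1) : ℝ) * (qs E.a E.e (i - 1) : ℝ)) /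
    ((E.delta (n - 1) : ℝ) * (qs E.a E.e n : ℝ))

/-- `d_n^+ = (Σ_{i=n+1}^∞ t_i D_{i-1}) / D_{n-1}` for `γ_*` (`t_i = λ_i`). -/
noncomputable def dplus (E : ANIE α) (n : ℕ) : ℝ :=
  (∑' k : ℕ, (E.lam (n + 1 + k) : ℝ) * E.D (n + 1 + k)) / E.D n

/-- `i ∈ S(γ_*)`: `|d_i^-| ≤ 1 - ᾱ_i` and `-(1-ε_{i+1}α_i) ≤ d_i^+ ≤ 1+ε_{i+1}α_i`. -/
def inS (E : ANIE α) (i : ℕ) : Prop :=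
  |E.dminus i| ≤ 1 - E.abar i ∧
    -(1 - (E.e (i + 1) : ℝ) * E.t i) ≤ E.dplus i ∧
      E.dplus i ≤ 1 + (E.e (i + 1) : ℝ) * E.t i

end ANIE

namespace ANIE

variable {α : ℝ}

theorem aux_tmul (E : ANIE α) (i : ℕ) :
    E.t i * ((E.a (i + 1) : ℝ) + (E.e (i + 2) : ℝ) * E.t (i + 1)) = 1 := by
  have h := E.hrec i
  have hp := E.htpos i
  have hne : ((E.a (i + 1) : ℝ) + (E.e (i + 2) : ℝ) * E.t (i + 1)) ≠ 0 := by
    intro h0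
    rw [h0] at h
    norm_num at h
    linarith
  rw [h]
  field_simp

theorem aux_eR (E : ANIE α) (i : ℕ) : (E.e i : ℝ) = 1 ∨ (E.e i : ℝ) = -1 := by
  rcases E.he i with h | h <;> simp [h]

theorem aux_aR (E : ANIE α) (i : ℕ) (hi : 1 ≤ i) : (2 : ℝ) ≤ E.a i := by
  exact_mod_cast E.ha i hi

/-- If `ε_{i+1} = -1` then `α_i ≤ 1/2`. -/
theorem aux_half (E : ANIE α) (i : ℕ) (h : E.e (i + 1) = -1) : E.t i ≤ 1 / 2 := by
  have h1 := E.aux_tmul i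
  have hp := E.htpos i
  have hp' := E.htpos (i + 1)
  have hl' := E.htlt1 (i + 1)
  have h2 := E.ha (i + 1) (by omega)
  by_cases ha : E.a (i + 1) = 2
  · rcases E.hcond1 (i + 1) (by omega) ha with h3 | h3
    · omega
    · have h4 : E.e (i + 2) = 1 := h3
      rw [ha, h4] at h1
      push_cast at h1
      nlinarith [mul_pos hp hp']
  · have h3 : (3 : ℝ) ≤ E.a (i + 1) := by
      have : 3 ≤ E.a (i + 1) := by omega
      exact_mod_cast this
    have h5 : 2 ≤ (E.a (i + 1) : ℝ) + (E.e (i + 2) : ℝ) * E.t (i + 1) := by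
      rcases E.aux_eR (i + 2) with h4 | h4 <;> rw [h4] <;> linarith
    nlinarith

theorem aux_tt (E : ANIE α) (i : ℕ) : E.t i ≤ 2 / 3 := by
  have h1 := E.aux_tmul i
  have hp := E.htpos i
  have hp' := E.htpos (i + 1)
  have h2 := E.aux_aR (i + 1) (by omega)
  have h5 : 3 / 2 ≤ (E.a (i + 1) : ℝ) + (E.e (i + 2) : ℝ) * E.t (i + 1) := by
    rcases E.he (i + 2) with h4 | h4
    · rw [h4]; push_cast; linarith
    · have := E.aux_half (i + 1) h4
      rw [h4]; push_cast; linarith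
  nlinarith

theorem aux_Dpos (E : ANIE α) (n : ℕ) : 0 < E.D n :=
  Finset.prod_pos fun j _ => E.htpos j

theorem aux_Dsucc (E : ANIE α) (n : ℕ) : E.D (n + 1) = E.D n * E.t n :=
  Finset.prod_range_succ _ _

theorem aux_Dle (E : ANIE α) (n k : ℕ) : E.D (n + k) ≤ E.D n * (2 / 3) ^ k := by
  induction k with
  | zero => simp
  | succ k ih =>
    rw [← add_assoc, aux_Dsucc, pow_succ, ← mul_assoc]
    have := E.aux_Dpos (n + k)
    have := E.htpos (n + k)
    exact mul_le_mul ih (E.aux_tt _) (by linarith) (by have := E.aux_Dpos n; positivity)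

theorem aux_lam (E : ANIE α) (n : ℕ) : |(E.lam n : ℝ)| ≤ 1 := by
  unfold lam
  split_ifs <;> simp

theorem aux_term (E : ANIE α) (n k : ℕ) :
    ‖(E.lam (n + 1 + k) : ℝ) * E.D (n + 1 + k)‖ ≤ E.D n * (2 / 3) * (2 / 3) ^ k := by
  rw [norm_mul, Real.norm_eq_abs, Real.norm_eq_abs, abs_of_pos (E.aux_Dpos _)]
  have h1 := E.aux_lam (n + 1 + k)
  have h2 := E.aux_Dpos (n + 1 + k)
  have h3 := E.aux_Dle n (1 + k)
  rw [← add_assoc, pow_add, pow_one, ← mul_assoc] at h3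
  nlinarith

theorem aux_geo (E : ANIE α) (n : ℕ) :
    HasSum (fun k : ℕ => E.D n * (2 / 3) * (2 / 3 : ℝ) ^ k) (E.D n * 2) := by
  have h := (hasSum_geometric_of_lt_one (r := (2 / 3 : ℝ)) (by norm_num) (by norm_num)).mul_left
    (E.D n * (2 / 3))
  have e : E.D n * 2 = E.D n * (2 / 3) * (1 - 2 / 3)⁻¹ := by
    have : (1 - 2 / 3 : ℝ)⁻¹ = 3 := by norm_num
    rw [this]
    ring
  rw [e]
  exact h

theorem aux_summable (E : ANIE α) (n : ℕ) :
    Summable fun k : ℕ => (E.lam (n + 1 + k) : ℝ) * E.D (n + 1 + k) :=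
  Summable.of_norm_bounded (E.aux_geo n).summable (E.aux_term n)

theorem aux_dbound (E : ANIE α) (n : ℕ) : |E.dplus n| ≤ 2 := by
  have h := tsum_of_norm_bounded (E.aux_geo n) (E.aux_term n)
  have hD := E.aux_Dpos n
  unfold dplus
  rw [abs_div, abs_of_pos hD, div_le_iff₀ hD]
  rw [Real.norm_eq_abs] at h
  linarith

theorem aux_drec (E : ANIE α) (n : ℕ) :
    E.dplus n = E.t n * ((E.lam (n + 1) : ℝ) + E.dplus (n + 1)) := by
  have hD := (E.aux_Dpos n).ne'
  have ht := (E.htpos n).ne'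
  have h := (E.aux_summable n).tsum_eq_zero_add
  unfold dplus
  rw [h]
  have h2 : (∑' k : ℕ, (E.lam (n + 1 + (k + 1)) : ℝ) * E.D (n + 1 + (k + 1))) =
      ∑' k : ℕ, (E.lam (n + 1 + 1 + k) : ℝ) * E.D (n + 1 + 1 + k) :=
    tsum_congr fun k => by
      rw [show n + 1 + (k + 1) = n + 1 + 1 + k by omega]
  rw [h2, add_zero]
  rw [aux_Dsucc E n]
  generalize (∑' k : ℕ, (E.lam (n + 1 + 1 + k) : ℝ) * E.D (n + 1 + 1 + k)) = S
  generalize (E.lam (n + 1) : ℝ) = x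
  field_simp

/-- sign of the last nonzero `λ`. -/
noncomputable def sg (E : ANIE α) (n : ℕ) : ℝ := (-1) ^ E.oddIdx n

theorem aux_sg (E : ANIE α) (n : ℕ) : E.sg n = 1 ∨ E.sg n = -1 := by
  unfold sg
  exact neg_one_pow_eq_or ℝ _

theorem aux_odd (E : ANIE α) (n : ℕ) (h : Odd (E.a n)) : (E.lam n : ℝ) = E.sg n := by
  unfold lam sg
  rw [if_pos h]
  push_cast
  rfl

theorem aux_even (E : ANIE α) (n : ℕ) (h : ¬ Odd (E.a n)) : (E.lam n : ℝ) = 0 := by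
  unfold lam
  rw [if_neg h]
  simp

theorem aux_sgodd (E : ANIE α) (n : ℕ) (h : Odd (E.a (n + 1))) : E.sg (n + 1) = - E.sg n := by
  unfold sg oddIdx
  rw [← Finset.insert_Icc_right_eq_Icc_add_one (by omega), Finset.filter_insert, if_pos h,
    Finset.card_insert_of_notMem (by simp), pow_succ]
  ring

theorem aux_sgeven (E : ANIE α) (n : ℕ) (h : ¬ Odd (E.a (n + 1))) : E.sg (n + 1) = E.sg n := by
  unfold sg oddIdx
  rw [← Finset.insert_Icc_right_eq_Icc_add_one (by omega), Finset.filter_insert, if_neg h]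

theorem aux_yodd (E : ANIE α) (n : ℕ) (h : Odd (E.a (n + 1))) :
    E.sg n * E.dplus n = - (E.t n * (1 + E.sg (n + 1) * E.dplus (n + 1))) := by
  rw [aux_drec, aux_odd E _ h, aux_sgodd E n h]
  rcases E.aux_sg n with h | h <;> rw [h] <;> ring

theorem aux_yeven (E : ANIE α) (n : ℕ) (h : ¬ Odd (E.a (n + 1))) :
    E.sg n * E.dplus n = E.t n * (E.sg (n + 1) * E.dplus (n + 1)) := by
  rw [aux_drec, aux_even E _ h, aux_sgeven E n h]
  ring

theorem aux_contr (E : ANIE α) (k : ℕ) : ∀ n,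
    -1 - 2 * (2 / 3 : ℝ) ^ k ≤ E.sg n * E.dplus n ∧
      E.sg n * E.dplus n ≤ 2 * (2 / 3 : ℝ) ^ k := by
  induction k with
  | zero =>
    intro n
    have h := abs_le.mp (E.aux_dbound n)
    rcases E.aux_sg n with h1 | h1 <;> rw [h1] <;> constructor <;> linarith [h.1, h.2]
  | succ k ih =>
    intro n
    obtain ⟨h1, h2⟩ := ih (n + 1)
    have ht := E.htpos n
    have ht2 := E.aux_tt n
    have hp : (0 : ℝ) < (2 / 3) ^ k := by positivity
    have hb : E.t n * (2 * (2 / 3 : ℝ) ^ k) ≤ 2 / 3 * (2 * (2 / 3 : ℝ) ^ k) :=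
      mul_le_mul_of_nonneg_right ht2 (by positivity)
    have e1 := mul_le_mul_of_nonneg_left h1 ht.le
    have e2 := mul_le_mul_of_nonneg_left h2 ht.le
    rw [pow_succ]
    by_cases h : Odd (E.a (n + 1))
    · rw [aux_yodd E n h]
      constructor <;> linarith
    · rw [aux_yeven E n h]
      constructor <;> linarith

theorem aux_y01 (E : ANIE α) (n : ℕ) :
    -1 ≤ E.sg n * E.dplus n ∧ E.sg n * E.dplus n ≤ 0 := by
  have hl : Tendsto (fun k : ℕ => 2 * (2 / 3 : ℝ) ^ k) atTop (nhds 0) := by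
    have := (tendsto_pow_atTop_nhds_zero_of_lt_one (r := (2 / 3 : ℝ)) (by norm_num)
      (by norm_num)).const_mul 2
    simpa using this
  constructor
  · have h2 : Tendsto (fun k : ℕ => -1 - 2 * (2 / 3 : ℝ) ^ k) atTop (nhds (-1 - 0)) :=
      tendsto_const_nhds.sub hl
    have := le_of_tendsto' h2 fun k => (E.aux_contr k n).1
    linarith
  · exact ge_of_tendsto' hl fun k => (E.aux_contr k n).2

theorem aux_yt (E : ANIE α) (n : ℕ) : -E.t n ≤ E.sg n * E.dplus n := by
  obtain ⟨h1, h2⟩ := E.aux_y01 (n + 1)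
  have ht := E.htpos n
  by_cases h : Odd (E.a (n + 1))
  · rw [aux_yodd E n h]
    nlinarith
  · rw [aux_yeven E n h]
    nlinarith

theorem aux_ytt (E : ANIE α) (n : ℕ) (h : ¬ Odd (E.a (n + 1))) :
    -(E.t n * E.t (n + 1)) ≤ E.sg n * E.dplus n := by
  have h1 := E.aux_yt (n + 1)
  have ht := E.htpos n
  rw [aux_yeven E n h]
  nlinarith

theorem aux_q (E : ANIE α) (n : ℕ) :
    0 < qs E.a E.e n ∧ qs E.a E.e n < qs E.a E.e (n + 1) := by
  induction n with
  | zero =>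
    have := E.ha 1 le_rfl
    simp only [qs]
    omega
  | succ n ih =>
    obtain ⟨h1, h2⟩ := ih
    refine ⟨by omega, ?_⟩
    have := E.ha (n + 2) (by omega)
    simp only [qs]
    rcases E.he (n + 2) with h | h <;> rw [h] <;> nlinarith

theorem aux_ab0 (E : ANIE α) : E.abar 0 = 0 := by simp [abar, ab]

theorem aux_abs (E : ANIE α) (n : ℕ) :
    E.abar (n + 1) = (qs E.a E.e n : ℝ) / qs E.a E.e (n + 1) := by simp [abar, ab]

theorem aux_qR (E : ANIE α) (n : ℕ) : (0 : ℝ) < qs E.a E.e n := by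
  exact_mod_cast (E.aux_q n).1

theorem aux_abpos (E : ANIE α) (n : ℕ) : 0 < E.abar (n + 1) := by
  rw [aux_abs]
  exact div_pos (E.aux_qR n) (E.aux_qR (n + 1))

theorem aux_abnn (E : ANIE α) (n : ℕ) : 0 ≤ E.abar n := by
  rcases n with _ | n
  · rw [aux_ab0]
  · exact (E.aux_abpos n).le

theorem aux_ablt (E : ANIE α) (n : ℕ) : E.abar n < 1 := by
  rcases n with _ | n
  · rw [aux_ab0]; norm_num
  · rw [aux_abs, div_lt_one (E.aux_qR (n + 1))]
    exact_mod_cast (E.aux_q n).2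

theorem aux_abmul (E : ANIE α) (n : ℕ) :
    E.abar (n + 1) * ((E.a (n + 1) : ℝ) + (E.e (n + 1) : ℝ) * E.abar n) = 1 := by
  rcases n with _ | n
  · rw [aux_ab0, aux_abs]
    have := (E.aux_qR 1).ne'
    simp only [qs] at this ⊢
    simp only [zero_add, mul_zero, add_zero, Int.cast_one]
    field_simp
  · rw [aux_abs, aux_abs]
    have h0 := (E.aux_qR (n + 1)).ne'
    have h1 := (E.aux_qR (n + 2)).ne'
    have h2 : (qs E.a E.e (n + 2) : ℝ) = E.a (n + 2) * qs E.a E.e (n + 1)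
      + E.e (n + 2) * qs E.a E.e n := by
      simp only [qs]; push_cast; rfl
    have h3 : (E.a (n + 1 + 1) : ℝ) + (E.e (n + 1 + 1) : ℝ) *
        ((qs E.a E.e n : ℝ) / qs E.a E.e (n + 1)) =
        (qs E.a E.e (n + 2) : ℝ) / qs E.a E.e (n + 1) := by
      rw [h2]; field_simp
    rw [h3]
    field_simp

theorem aux_dm0 (E : ANIE α) : E.dminus 0 = 0 := by simp [dminus]

theorem aux_delta (E : ANIE α) (n : ℕ) : (E.delta n : ℝ) = 1 ∨ (E.delta n : ℝ) = -1 := by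
  have h : ∀ m, (∏ j ∈ Finset.Icc 1 m, (-E.e j)) = 1 ∨ (∏ j ∈ Finset.Icc 1 m, (-E.e j)) = -1 := by
    intro m
    induction m with
    | zero => simp
    | succ m ih =>
      rw [Finset.prod_Icc_succ_top (by omega)]
      rcases ih with h | h <;> rcases E.he (m + 1) with h' | h' <;> simp [h, h']
  unfold delta
  rcases h (n + 1) with h | h <;> rw [h] <;> simp

theorem aux_deltas (E : ANIE α) (n : ℕ) :
    (E.delta (n + 1) : ℝ) = - (E.delta n : ℝ) * E.e (n + 2) := by
  unfold delta
  rw [Finset.prod_Icc_succ_top (by omega)]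
  push_cast
  ring

theorem aux_dmrec (E : ANIE α) (n : ℕ) :
    E.dminus (n + 1) = E.abar (n + 1) *
      ((E.lam (n + 1) : ℝ) - (E.e (n + 1) : ℝ) * E.dminus n) := by
  rcases n with _ | n
  · rw [aux_dm0, aux_abs]
    have h0 := (E.aux_qR 1).ne'
    have hd : (E.delta 0 : ℝ) ≠ 0 := by rcases E.aux_delta 0 with h | h <;> rw [h] <;> norm_num
    simp only [dminus, zero_add, Finset.Icc_self, Finset.sum_singleton, Nat.sub_self]
    field_simp
    ring
  · rw [aux_abs]
    have h0 := (E.aux_qR (n + 1)).ne'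
    have h1 := (E.aux_qR (n + 2)).ne'
    unfold dminus
    rw [Finset.sum_Icc_succ_top (b := n + 1) (by omega)]
    simp only [Nat.add_sub_cancel]
    rw [aux_deltas E n]
    generalize (∑ i ∈ Finset.Icc 1 (n + 1),
      (E.lam i : ℝ) * (E.delta (i - 1) : ℝ) * (qs E.a E.e (i - 1) : ℝ)) = S
    have e3 : E.e (n + 1 + 1) = E.e (n + 2) := rfl
    rw [e3]
    rcases E.aux_delta n with h | h <;> rcases E.aux_eR (n + 2) with h' | h' <;> rw [h, h'] <;>
      field_simp <;> ring

theorem aux_dmb (E : ANIE α) (n : ℕ) : |E.dminus n| ≤ 1 - E.abar n := by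
  induction n with
  | zero => rw [aux_dm0, aux_ab0]; norm_num
  | succ n ih =>
    have hm := E.aux_abmul n
    have hp := E.aux_abpos n
    have hn := E.aux_abnn n
    have hn1 := E.aux_ablt n
    have ha2 := E.aux_aR (n + 1) (by omega)
    rw [aux_dmrec, abs_mul, abs_of_pos hp]
    have hkey : |(E.lam (n + 1) : ℝ) - (E.e (n + 1) : ℝ) * E.dminus n| ≤
        (E.a (n + 1) : ℝ) + (E.e (n + 1) : ℝ) * E.abar n - 1 := by
      have h1 : |(E.lam (n + 1) : ℝ) - (E.e (n + 1) : ℝ) * E.dminus n| ≤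
          |(E.lam (n + 1) : ℝ)| + |E.dminus n| := by
        refine (abs_sub _ _).trans (le_of_eq ?_)
        rw [abs_mul]
        rcases E.aux_eR (n + 1) with h | h <;> rw [h] <;> simp
      by_cases h : Odd (E.a (n + 1))
      · have h3 : (3 : ℝ) ≤ E.a (n + 1) := by
          have h4 := E.ha (n + 1) (by omega)
          have : 3 ≤ E.a (n + 1) := by
            obtain ⟨m, hm⟩ := h
            omega
          exact_mod_cast this
        have h4 := E.aux_lam (n + 1)
        rcases E.aux_eR (n + 1) with h | h <;> rw [h] at h1 ⊢ <;> linarith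
      · rw [E.aux_even _ h] at h1 ⊢
        rw [abs_zero] at h1
        rcases E.aux_eR (n + 1) with h | h <;> rw [h] at h1 ⊢ <;> linarith
    nlinarith [mul_le_mul_of_nonneg_left hkey hp.le]

theorem aux_dm2 (E : ANIE α) (n : ℕ) : |E.dminus n| ≤ 2 * E.abar n := by
  rcases n with _ | n
  · rw [aux_dm0, aux_ab0]; norm_num
  · have hp := E.aux_abpos n
    have hn := E.aux_abnn n
    have hb := E.aux_dmb n
    rw [aux_dmrec, abs_mul, abs_of_pos hp]
    have h1 : |(E.lam (n + 1) : ℝ) - (E.e (n + 1) : ℝ) * E.dminus n| ≤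
        |(E.lam (n + 1) : ℝ)| + |E.dminus n| := by
      refine (abs_sub _ _).trans (le_of_eq ?_)
      rw [abs_mul]
      rcases E.aux_eR (n + 1) with h | h <;> rw [h] <;> simp
    have h4 := E.aux_lam (n + 1)
    nlinarith

/-- The lower bound for the first factor. -/
theorem aux_A (E : ANIE α) (n : ℕ) (σ : ℝ) (hσ : σ = 1 ∨ σ = -1)
    (hs : σ = E.sg (n + 1)) (hab : E.abar (n + 1) < 1 / 2) :
    1 / 2 ≤ 1 - E.abar (n + 1) + σ * E.dminus (n + 1) ∨
    (E.a (n + 1) = 2 ∧ E.e (n + 1) = 1 ∧ 1 / 3 ≤ E.abar (n + 1) ∧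
      2 / 7 ≤ 1 - E.abar (n + 1) + σ * E.dminus (n + 1)) := by
  have hm := E.aux_abmul n
  have hp := E.aux_abpos n
  have hn := E.aux_abnn n
  have hn1 := E.aux_ablt n
  have hb := E.aux_dmb n
  have hb2 := E.aux_dm2 n
  have hx : |σ * E.dminus n| = |E.dminus n| := by
    rcases hσ with h | h <;> rw [h] <;> simp
  rw [← hx] at hb hb2
  have hrec : σ * E.dminus (n + 1) = E.abar (n + 1) *
      (σ * (E.lam (n + 1) : ℝ) - (E.e (n + 1) : ℝ) * (σ * E.dminus n)) := by
    rw [aux_dmrec]; ring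
  rw [hrec]
  have hle := abs_le.mp hb
  have hle2 := abs_le.mp hb2
  generalize σ * E.dminus n = x at *
  generalize E.abar n = b' at *
  generalize E.abar (n + 1) = b at *
  have ha := E.ha (n + 1) (by omega)
  by_cases h : Odd (E.a (n + 1))
  · left
    rw [aux_odd E _ h, ← hs]
    have h1 : σ * σ = 1 := by rcases hσ with h | h <;> rw [h] <;> norm_num
    rw [h1]
    rcases E.aux_eR (n + 1) with h | h <;> rw [h] <;> nlinarith
  · rw [aux_even E _ h]
    by_cases h2 : E.a (n + 1) = 2
    · rcases E.he (n + 1) with h3 | h3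
      · right
        rw [h2, h3] at hm
        refine ⟨h2, h3, ?_, ?_⟩
        · push_cast at hm
          nlinarith
        · rw [h3]
          push_cast at hm ⊢
          have e : 1 - b + b * (σ * 0 - 1 * x) = b * (1 + b' - x) := by linarith
          rw [e]
          by_cases hc : b' ≤ 1 / 3
          · nlinarith
          · nlinarith
      · exfalso
        rw [h2, h3] at hm
        push_cast at hm
        nlinarith
    · left
      have h4 : (4 : ℝ) ≤ E.a (n + 1) := by
        have : 4 ≤ E.a (n + 1) := by
          rw [Int.not_odd_iff_even] at h
          obtain ⟨m, hm⟩ := h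
          omega
        exact_mod_cast this
      rcases E.aux_eR (n + 1) with h | h <;> rw [h] at hm ⊢ <;> nlinarith

/-- The elementary final computation. -/
theorem aux_fin (A B den c : ℝ) (hc : 0 < c) (hA : c ≤ A) (hd : 0 < den)
    (hB : den < 6 * c * B) : 1 / 4 * A * (B / den) > 1 / 24 := by
  have hBp : 0 < B := by
    by_contra hB0
    push Not at hB0
    nlinarith
  have h1 : 1 / (6 * c) < B / den := by
    rw [div_lt_div_iff₀ (by positivity) hd]
    linarith
  have h3 : 0 < B / den := div_pos hBp hd
  have h4 : c * (1 / (6 * c)) < c * (B / den) := mul_lt_mul_of_pos_left h1 hc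
  have h5 : c * (B / den) ≤ A * (B / den) := mul_le_mul_of_nonneg_right hA h3.le
  have h6 : c * (1 / (6 * c)) = 1 / 6 := by field_simp
  have h7 : 1 / 4 * A * (B / den) = 1 / 4 * (A * (B / den)) := by ring
  rw [h7]
  linarith

end ANIE

/-- Lemma 7: for an adjusted nearest integer expansion, if `σ d_i^+ < 0`, `ᾱ_i < 1/2`
and not (`a_{i+1} = 3` with `ε_{i+1} = -1`), then `s_1(i), s_3(i) > 1/24` for `γ_*`. -/
theorem stmt14 (α : ℝ) (hirr : Irrational α) (h0 : 0 < α) (h12 : α < 1 / 2)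
    (E : ANIE α) (i : ℕ) (hi : 1 ≤ i)
    (σ : ℝ) (hσ : σ = 1 ∨ σ = -1)
    (hdp : σ * E.dplus i < 0) (habar : E.abar i < 1 / 2)
    (h : ¬(E.a (i + 1) = 3 ∧ E.e (i + 1) = -1)) :
    1 / 4 * (1 - E.abar i + σ * E.dminus i) *
        ((1 + (E.e (i + 1) : ℝ) * E.t i + σ * E.dplus i) /
          (1 + (E.e (i + 1) : ℝ) * E.abar i * E.t i)) > 1 / 24 := by
  obtain ⟨n, rfl⟩ : ∃ n, i = n + 1 := ⟨i - 1, by omega⟩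
  have hy1 := E.aux_yt (n + 1)
  have hy0 := (E.aux_y01 (n + 1)).2
  have hye := E.aux_ytt (n + 1)
  have hs : σ = E.sg (n + 1) := by
    rcases hσ with h1 | h1 <;> rcases E.aux_sg (n + 1) with h2 | h2 <;>
      rw [h1] at hdp <;> rw [h2] at hy0 <;> rw [h1, h2] <;> exfalso <;> linarith
  have hA := E.aux_A n σ hσ hs habar
  rw [← hs] at hy1 hye
  have hbp := E.aux_abpos n
  have htp := E.htpos (n + 1)
  have ht1 := E.htlt1 (n + 1)
  have hup := E.htpos (n + 1 + 1)
  have hu1 := E.htlt1 (n + 1 + 1)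
  have htm := E.aux_tmul (n + 1)
  have hhalf := E.aux_half (n + 1 + 1)
  have hthalf := E.aux_half (n + 1)
  have ha2 := E.ha (n + 1 + 1) (by omega)
  have hc1 := E.hcond1 (n + 1 + 1) (by omega)
  have hc4 := E.hcond4 (n + 1) 0 (by omega)
  have he' := E.he (n + 1 + 1 + 1)
  have hidx : n + 1 + 2 = n + 1 + 1 + 1 := rfl
  rw [hidx] at htm
  generalize σ * E.dplus (n + 1) = d at *
  generalize E.abar (n + 1) = b at *
  generalize E.t (n + 1) = t at *
  generalize E.t (n + 1 + 1) = u at *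
  have htu : 0 < t * u := mul_pos htp hup
  have htu1 : t * u < t := by nlinarith
  have hbt : 0 < b * t := mul_pos hbp htp
  have hbt1 : b * t < 1 / 2 := by nlinarith
  rcases E.he (n + 1 + 1) with hε | hε
  · rw [hε]
    push_cast
    rcases hA with hA | ⟨-, -, -, hA⟩
    · exact ANIE.aux_fin _ _ _ _ (by norm_num) hA (by linarith) (by linarith)
    · exact ANIE.aux_fin _ _ _ _ (by norm_num) hA (by linarith) (by linarith)
  · rw [hε]
    push_cast
    have htuh : E.e (n + 1 + 1 + 1) = -1 → t * u ≤ t / 2 := fun hh => by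
      have := hhalf hh
      nlinarith
    by_cases h2 : E.a (n + 1 + 1) = 2
    · have hne : ¬ Odd (E.a (n + 1 + 1)) := by rw [h2]; decide
      have hd := hye hne
      have h3 : E.e (n + 1 + 1 + 1) = 1 := by
        rcases hc1 h2 with h3 | h3
        · omega
        · exact h3
      rw [h2, h3] at htm
      push_cast at htm
      rcases hA with hA | ⟨hA1, hA2, -, -⟩
      · exact ANIE.aux_fin _ _ _ _ (by norm_num) hA (by linarith) (by linarith)
      · exfalso
        apply hc4
        refine ⟨by rw [hA1, hA2]; norm_num, fun j hj => by omega, ?_⟩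
        rw [add_zero, h2, hε]
        norm_num
    · have h3 : E.a (n + 1 + 1) ≠ 3 := fun h3 => h ⟨h3, hε⟩
      by_cases h4 : E.a (n + 1 + 1) = 4
      · have hne : ¬ Odd (E.a (n + 1 + 1)) := by rw [h4]; decide
        have hd := hye hne
        rw [h4] at htm
        rcases he' with he' | he'
        · rw [he'] at htm
          push_cast at htm
          rcases hA with hA | ⟨-, -, hb3, hA⟩
          · exact ANIE.aux_fin _ _ _ _ (by norm_num) hA (by linarith) (by linarith)
          · exact ANIE.aux_fin _ _ _ _ (by norm_num) hA (by linarith) (by nlinarith)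
        · have := htuh he'
          rw [he'] at htm
          push_cast at htm
          rcases hA with hA | ⟨-, -, hb3, hA⟩
          · exact ANIE.aux_fin _ _ _ _ (by norm_num) hA (by linarith) (by linarith)
          · exact ANIE.aux_fin _ _ _ _ (by norm_num) hA (by linarith) (by nlinarith)
      · have h5 : (5 : ℝ) ≤ E.a (n + 1 + 1) := by
          have : 5 ≤ E.a (n + 1 + 1) := by omega
          exact_mod_cast this
        have hta : 5 * t ≤ t * (E.a (n + 1 + 1) : ℝ) := by nlinarith
        have ht29 : t ≤ 2 / 9 := by
          rcases he' with he' | he'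
          · rw [he'] at htm
            push_cast at htm
            linarith
          · have := htuh he'
            rw [he'] at htm
            push_cast at htm
            linarith
        rcases hA with hA | ⟨-, -, hb3, hA⟩
        · exact ANIE.aux_fin _ _ _ _ (by norm_num) hA (by linarith) (by linarith)
        · exact ANIE.aux_fin _ _ _ _ (by norm_num) hA (by linarith) (by nlinarith)
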